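/- Let M be an integral model of a multi-filtered K-vector space (V, Fil_i^•), let π ∈ 𝔪 be nonzero, and suppose the short exact sequence of k-vector spaces 0 → B̄ → M̄ → Ḡ → 0 is liftable modulo π via a lifting 0 → B̃ → M̃ = M/πM → G̃ → 0. Set M' = ker(M → M/πM → G̃). Then M' is again an integral model of (V, Fil_i^•), there are natural isomorphisms M/M' ≅ G̃ and M'/πM ≅ B̃ fitting into a short exact sequence of O/π-modules 0 → M/M' → M'/πM' → M'/πM → 0, and tensoring this sequence with k over O yields a short exact sequence of k-vector spaces 0 → Ḡ → M̄' → B̄ → 0 whose maps preserve the induced filtrations (where M̄' = M' ⊗_O k carries the filtrations induced from Fil_i^j ∩ M'). -/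

import Mathlib

/-! The content lies in one divisibility property of `G̃ = M̃/B̃`. A finite flat module over the
local ring `O/π` is free, so if `π = a c` and `c` kills `x ∈ G̃`, then `x` is divisible by `a`
(`exists_smul_of_smul_eq_zero`). For the lattice this reads: `c m ∈ M'` implies `m ∈ M' + aM`
(`exists_add_smul_of_smul_mem`).

Over a valuation ring every element of `𝔪N` is a single product `a n` with `a ∈ 𝔪`
(`exists_smul_of_mem_smul_top`). Comparing `a` with `π`, the divisibility property gives both
`πm ∈ 𝔪M' → m ∈ M' + 𝔪M`, which is the injectivity of `Ḡ → M̄'`, `[m] ↦ [πm]`, and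
`M' ∩ 𝔪M ⊆ πM + 𝔪M'`, which is the exactness at `M̄'`.

That `M'` is a lattice follows from the general facts that `B̃` is finitely generated (`G̃` being
finitely presented) and that finitely generated torsion-free modules over a valuation ring are
free; it spans `V` because it contains `πM`. Finally `m ↦ πm` and the inclusion `M' ⊆ M` both
respect the subspaces `Fil_i^j` of `V`, hence the induced filtrations. -/

open Module Submodule

section FilteredDefs

variable (F : Type*) [CommRing F] {V : Type*} [AddCommGroup V] [Module F V] {s : ℕ}

/-- The weight of a multi-filtered space: `w = Σ_i Σ_j j · dim (Fil_i^j / Fil_i^{j+1})`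
(the filtrations are assumed to vanish at step `l`). -/
noncomputable def filWeight (Fil : Fin s → ℕ → Submodule F V) (l : ℕ) : ℕ :=
  ∑ i : Fin s, ∑ j ∈ Finset.range (l + 1),
    j * Module.finrank F ((Fil i j) ⧸ (Submodule.comap (Fil i j).subtype (Fil i (j + 1))))

/-- The slope `μ = w / dim`. -/
noncomputable def filSlope (Fil : Fin s → ℕ → Submodule F V) (l : ℕ) : ℚ :=
  (filWeight F Fil l : ℚ) / (Module.finrank F V : ℚ)

/-- The filtrations induced on a subspace `W ⊆ V`. -/
def inducedFil (Fil : Fin s → ℕ → Submodule F V) (W : Submodule F V) :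
    Fin s → ℕ → Submodule F W := fun i j => (Fil i j).comap W.subtype

/-- Semistability: every nonzero subspace, with the induced filtrations, has slope at most
that of the whole space. -/
def Semistable (Fil : Fin s → ℕ → Submodule F V) (l : ℕ) : Prop :=
  ∀ W : Submodule F V, W ≠ ⊥ →
    filSlope F (inducedFil F Fil W) l ≤ filSlope F Fil l

end FilteredDefs

section Models

variable (O : Type*) [CommRing O] [IsDomain O] [ValuationRing O]
variable (K : Type*) [Field K] [Algebra O K] [IsFractionRing O K]
variable {V : Type*} [AddCommGroup V] [Module K V] [Module O V] [IsScalarTower O K V]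
variable {s : ℕ}

/-- An integral model: a finite free `O`-submodule of `V` spanning `V` over `K`. -/
def IsIntegralModel (M : Submodule O V) : Prop :=
  Module.Finite O M ∧ Module.Free O M ∧ Submodule.span K (M : Set V) = ⊤

/-- The filtration induced on an integral model `M`: `Fil_i^j ∩ M`. -/
def filM (Fil : Fin s → ℕ → Submodule K V) (M : Submodule O V) :
    Fin s → ℕ → Submodule O M :=
  fun i j => ((Fil i j).restrictScalars O).comap M.subtype

/-- The reduction `M̄ = M ⊗_O k = M / 𝔪M`. -/
abbrev Mbar (M : Submodule O V) : Type _ :=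
  M ⧸ ((IsLocalRing.maximalIdeal O) • ⊤ : Submodule O M)

noncomputable instance (M : Submodule O V) :
    Module (IsLocalRing.ResidueField O) (Mbar O M) :=
  inferInstanceAs (Module (O ⧸ IsLocalRing.maximalIdeal O)
    (M ⧸ ((IsLocalRing.maximalIdeal O) • ⊤ : Submodule O M)))

instance (M : Submodule O V) :
    IsScalarTower O (IsLocalRing.ResidueField O) (Mbar O M) :=
  inferInstanceAs (IsScalarTower O (O ⧸ IsLocalRing.maximalIdeal O)
    (M ⧸ ((IsLocalRing.maximalIdeal O) • ⊤ : Submodule O M)))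

/-- The reduction map `M → M̄`. -/
noncomputable def redMap (M : Submodule O V) : M →ₗ[O] Mbar O M :=
  Submodule.mkQ _

/-- The induced filtration `Fil̄_i^j` on the reduction `M̄`: the image of `Fil_i^j ∩ M`. -/
noncomputable def filBar (Fil : Fin s → ℕ → Submodule K V) (M : Submodule O V) :
    Fin s → ℕ → Submodule (IsLocalRing.ResidueField O) (Mbar O M) :=
  fun i j => Submodule.span _ (redMap O M '' (filM O K Fil M i j : Set M))

/-- The quotient ring `O/π`. -/
abbrev Oq (π : O) : Type _ := O ⧸ Ideal.span {π}

/-- The quotient `M̃ = M/πM`. -/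
abbrev Mtil (M : Submodule O V) (π : O) : Type _ :=
  M ⧸ ((Ideal.span {π}) • ⊤ : Submodule O M)

/-- The reduction map `M → M̃`. -/
noncomputable def redMapTil (M : Submodule O V) (π : O) : M →ₗ[O] Mtil O M π :=
  Submodule.mkQ _

/-- The induced filtration `Fil̃_i^j` on `M̃`: the image of `Fil_i^j ∩ M`. -/
noncomputable def filTil (Fil : Fin s → ℕ → Submodule K V) (M : Submodule O V) (π : O) :
    Fin s → ℕ → Submodule (Oq O π) (Mtil O M π) :=
  fun i j => Submodule.span _ (redMapTil O M π '' (filM O K Fil M i j : Set M))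

/-- The natural map `M̃ = M/πM → M̄ = M/𝔪M` for `π ∈ 𝔪`. -/
noncomputable def thetaMap (M : Submodule O V) (π : O)
    (hπ : π ∈ IsLocalRing.maximalIdeal O) : Mtil O M π →ₗ[O] Mbar O M :=
  Submodule.mapQ _ _ LinearMap.id (by
    rw [Submodule.comap_id]
    exact Submodule.smul_mono (Ideal.span_le.mpr (by simpa using hπ)) le_rfl)

/-- The short exact sequence `0 → B̄ → M̄ → Ḡ → 0` of `k`-vector spaces determined by a
subspace `B̄ ⊆ M̄` is liftable modulo `π ∈ 𝔪`: there is a short exact sequence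
`0 → B̃ → M̃ → G̃ → 0` of `O/π`-modules with `G̃ = M̃/B̃` flat over `O/π`, reducing modulo `𝔪`
to the given sequence, and such that `Fil̃_i^j ∩ B̃` surjects onto `Fil̄_i^j ∩ B̄`. -/
def LiftableModulo (Fil : Fin s → ℕ → Submodule K V) (M : Submodule O V) (π : O)
    (hπ : π ∈ IsLocalRing.maximalIdeal O)
    (Bbar : Submodule (IsLocalRing.ResidueField O) (Mbar O M)) : Prop :=
  ∃ Btil : Submodule (Oq O π) (Mtil O M π),
    Module.Flat (Oq O π) ((Mtil O M π) ⧸ Btil) ∧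
    thetaMap O M π hπ '' (Btil : Set (Mtil O M π)) = (Bbar : Set (Mbar O M)) ∧
    ∀ i j, thetaMap O M π hπ ''
        ((filTil O K Fil M π i j ⊓ Btil : Submodule (Oq O π) (Mtil O M π)) : Set (Mtil O M π))
      = ((filBar O K Fil M i j ⊓ Bbar :
          Submodule (IsLocalRing.ResidueField O) (Mbar O M)) : Set (Mbar O M))

end Models

section Mprime

variable (O : Type*) [CommRing O] [IsDomain O] [ValuationRing O]
variable {V : Type*} [AddCommGroup V] [Module O V]

/-- `M' = ker(M → M/πM → G̃)`, i.e. the preimage in `M` of `B̃ ⊆ M̃ = M/πM`,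
regarded as a submodule of `V`. -/
noncomputable def Mprime (M : Submodule O V) (π : O)
    (Btil : Submodule (Oq O π) (Mtil O M π)) : Submodule O V :=
  Submodule.map M.subtype
    (Submodule.comap (redMapTil O M π) (Submodule.restrictScalars O Btil))

/-- The map `M̄' → M̄` on reductions induced by an inclusion `M' ≤ M`. -/
noncomputable def redIncl (M' M : Submodule O V) (h : M' ≤ M) :
    Mbar O M' →ₗ[O] Mbar O M :=
  Submodule.mapQ _ _ (Submodule.inclusion h) (by
    rw [← Submodule.map_le_iff_le_comap, Submodule.map_smul'']
    exact Submodule.smul_mono le_rfl le_top)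

end Mprime

/-! ### Divisibility over `O` and `O/π` -/

section Divisibility

/-- Of two coefficients in a valuation ring one divides the other, so an element of
`I N` is a single product. -/
theorem exists_smul_of_mem_smul_top {O : Type*} [CommRing O] [IsDomain O] [ValuationRing O]
    {N : Type*} [AddCommGroup N] [Module O N] (I : Ideal O) {x : N}
    (hx : x ∈ (I • ⊤ : Submodule O N)) : ∃ a ∈ I, ∃ n : N, x = a • n := by
  induction hx using Submodule.smul_induction_on' with
  | smul r hr n _ => exact ⟨r, hr, n, rfl⟩
  | add x _ y _ hx hy =>
    obtain ⟨a, ha, m, rfl⟩ := hx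
    obtain ⟨b, hb, n, rfl⟩ := hy
    rcases ValuationRing.dvd_total a b with ⟨c, rfl⟩ | ⟨c, rfl⟩
    · exact ⟨a, ha, m + c • n, by rw [smul_add, mul_smul]⟩
    · exact ⟨b, hb, c • m + n, by rw [smul_add, mul_smul]⟩

theorem mem_span_singleton_smul_top {O : Type*} [CommRing O] {N : Type*} [AddCommGroup N]
    [Module O N] {π : O} {x : N} :
    x ∈ (Ideal.span {π} • ⊤ : Submodule O N) ↔ ∃ n : N, x = π • n := by
  rw [Submodule.ideal_span_singleton_smul, Submodule.mem_smul_pointwise_iff_exists]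
  simp [eq_comm]

/-- In `O/(ac)` the annihilator of `c` is generated by `a`; hence the same divisibility in every
finite flat, i.e. finite free, module. -/
theorem exists_smul_of_smul_eq_zero {O : Type*} [CommRing O] [IsDomain O] [IsLocalRing O]
    {π a c : O} (hπ : π ∈ IsLocalRing.maximalIdeal O) (hac : π = a * c) (hc : c ≠ 0)
    {G : Type*} [AddCommGroup G] [Module (Oq O π) G] [Module.Finite (Oq O π) G]
    [Module.Flat (Oq O π) G] {x : G}
    (hx : (Ideal.Quotient.mk (Ideal.span {π}) c) • x = 0) :
    ∃ y : G, x = (Ideal.Quotient.mk (Ideal.span {π}) a) • y := by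
  have : Nontrivial (Oq O π) := Ideal.Quotient.nontrivial_iff.2 <| by
    rwa [Ne, Ideal.span_singleton_eq_top]
  have : IsLocalRing (Oq O π) :=
    IsLocalRing.of_surjective' (Ideal.Quotient.mk (Ideal.span {π})) Ideal.Quotient.mk_surjective
  have : Module.Free (Oq O π) G := Module.free_of_flat_of_isLocalRing
  let b := Module.Free.chooseBasis (Oq O π) G
  have key : ∀ i, ∃ z : Oq O π, b.repr x i = Ideal.Quotient.mk (Ideal.span {π}) a * z := by
    intro i
    obtain ⟨y, hy⟩ := Ideal.Quotient.mk_surjective (b.repr x i)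
    have h : Ideal.Quotient.mk (Ideal.span {π}) (c * y) = 0 := by
      rw [map_mul, hy]
      simpa using DFunLike.congr_fun (congrArg b.repr hx) i
    rw [Ideal.Quotient.eq_zero_iff_mem, Ideal.mem_span_singleton] at h
    obtain ⟨z, hz⟩ := h
    refine ⟨Ideal.Quotient.mk _ z, ?_⟩
    rw [← hy, ← map_mul]
    congr 1
    apply mul_left_cancel₀ hc
    rw [hz, hac]
    ring
  choose z hz using key
  refine ⟨∑ i, z i • b i, ?_⟩
  rw [Finset.smul_sum]
  refine (b.sum_repr x).symm.trans ?_
  refine Finset.sum_congr rfl fun i _ => ?_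
  rw [hz, mul_smul]

end Divisibility

/-! ### The modified lattice `M'` and its exact sequences -/

section Modification

variable {O : Type*} [CommRing O] [IsDomain O] [ValuationRing O]
variable {V : Type*} [AddCommGroup V] [Module O V]
variable {M : Submodule O V} {π : O} {Btil : Submodule (Oq O π) (Mtil O M π)}

theorem mem_Mprime (m : M) : (m : V) ∈ Mprime O M π Btil ↔ redMapTil O M π m ∈ Btil := by
  simp [Mprime]

theorem Mprime_le : Mprime O M π Btil ≤ M := Submodule.map_subtype_le M _

theorem redMapTil_eq_zero {m : M} : redMapTil O M π m = 0 ↔ ∃ n : M, m = π • n := by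
  rw [← mem_span_singleton_smul_top]
  exact Submodule.Quotient.mk_eq_zero _

theorem redMap_eq_zero {m : M} :
    redMap O M m = 0 ↔ m ∈ (IsLocalRing.maximalIdeal O • ⊤ : Submodule O M) :=
  Submodule.Quotient.mk_eq_zero _

theorem smul_mem_Mprime (m : M) : π • (m : V) ∈ Mprime O M π Btil := by
  have h : redMapTil O M π (π • m) = 0 := redMapTil_eq_zero.2 ⟨m, rfl⟩
  have := mem_Mprime (Btil := Btil) (π • m)
  rw [h] at this
  exact this.2 Btil.zero_mem

theorem finite_Mtil [Module.Finite O M] : Module.Finite (Oq O π) (Mtil O M π) :=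
  Module.Finite.of_restrictScalars_finite O _ _

/-- Divisibility in `G̃ = M̃/B̃`, read on the lattice: `π = a c` and `c m ∈ M'` give
`m ∈ M' + aM`. -/
theorem exists_add_smul_of_smul_mem [Module.Finite O M]
    (hπ : π ∈ IsLocalRing.maximalIdeal O) [Module.Flat (Oq O π) (Mtil O M π ⧸ Btil)]
    {a c : O} (hac : π = a * c) (hc : c ≠ 0) (m : M) (hm : c • (m : V) ∈ Mprime O M π Btil) :
    ∃ m' ∈ Mprime O M π Btil, ∃ n : M, (m : V) = m' + a • (n : V) := by
  have := finite_Mtil (O := O) (M := M) (π := π)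
  have h0 : (Ideal.Quotient.mk (Ideal.span {π}) c) • Btil.mkQ (redMapTil O M π m) = 0 := by
    rw [← map_smul]
    exact (Submodule.Quotient.mk_eq_zero _).2 ((mem_Mprime (c • m)).1 hm)
  obtain ⟨y, hy⟩ := exists_smul_of_smul_eq_zero hπ hac hc h0
  obtain ⟨y, rfl⟩ := Btil.mkQ_surjective y
  obtain ⟨n, rfl⟩ := Submodule.mkQ_surjective _ y
  refine ⟨((m - a • n : M) : V), (mem_Mprime _).2 ?_, n, by simp⟩
  rw [← map_smul] at hy
  have := (Submodule.Quotient.eq Btil).1 hy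
  rw [map_sub]
  exact this

/-- `πm ∈ aM'` forces `m ∈ M' + aM`; for `a ∈ 𝔪` this gives the injectivity of `Ḡ → M̄'`. -/
theorem exists_add_smul_of_smul_eq [Module.Finite O M] [Module.IsTorsionFree O V]
    (hπ : π ∈ IsLocalRing.maximalIdeal O) (hπ0 : π ≠ 0)
    [Module.Flat (Oq O π) (Mtil O M π ⧸ Btil)] {a : O}
    (m : M) (m' : Mprime O M π Btil) (h : π • (m : V) = a • (m' : V)) :
    ∃ b ∈ Mprime O M π Btil, ∃ n : M, (m : V) = b + a • (n : V) := by
  rcases ValuationRing.dvd_total a π with ⟨c, hc⟩ | ⟨c, hc⟩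
  · have ha0 : a ≠ 0 := by rintro rfl; simp [hc] at hπ0
    have hc0 : c ≠ 0 := by rintro rfl; simp [hc] at hπ0
    refine exists_add_smul_of_smul_mem hπ hc hc0 m ?_
    have h' : a • c • (m : V) = a • (m' : V) := by rw [← h, ← mul_smul, ← hc]
    have hcm : c • (m : V) = m' := smul_right_injective V ha0 h'
    rw [hcm]
    exact m'.2
  · rw [hc, mul_smul] at h
    exact ⟨c • (m' : V), Submodule.smul_mem _ _ m'.2, 0,
      by simpa using smul_right_injective V hπ0 h⟩

/-- `M' ∩ aM ⊆ πM + aM'`; for `a ∈ 𝔪` this gives the exactness at `M̄'`. -/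
theorem exists_smul_add_of_eq_smul [Module.Finite O M]
    (hπ : π ∈ IsLocalRing.maximalIdeal O) (hπ0 : π ≠ 0)
    [Module.Flat (Oq O π) (Mtil O M π ⧸ Btil)] {a : O}
    (m : M) (h : a • (m : V) ∈ Mprime O M π Btil) :
    ∃ n : M, ∃ b ∈ Mprime O M π Btil, a • (m : V) = π • (n : V) + a • b := by
  rcases ValuationRing.dvd_total a π with ⟨c, hc⟩ | ⟨c, hc⟩
  · have ha0 : a ≠ 0 := by rintro rfl; simp [hc] at hπ0
    obtain ⟨b, hb, n, hn⟩ :=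
      exists_add_smul_of_smul_mem hπ (hc.trans (mul_comm a c)) ha0 m h
    exact ⟨n, b, hb, by rw [hn, smul_add, hc, mul_smul, add_comm]⟩
  · exact ⟨c • m, 0, Submodule.zero_mem _, by simp [hc, mul_smul]⟩

theorem finite_Mprime [Module.Finite O M] (hπ : π ∈ IsLocalRing.maximalIdeal O)
    [Module.Flat (Oq O π) (Mtil O M π ⧸ Btil)] : Module.Finite O (Mprime O M π Btil) := by
  have := finite_Mtil (O := O) (M := M) (π := π)
  have : Nontrivial (Oq O π) := Ideal.Quotient.nontrivial_iff.2 <| by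
    rwa [Ne, Ideal.span_singleton_eq_top]
  have : IsLocalRing (Oq O π) :=
    IsLocalRing.of_surjective' (Ideal.Quotient.mk (Ideal.span {π})) Ideal.Quotient.mk_surjective
  have : Module.Free (Oq O π) (Mtil O M π ⧸ Btil) := Module.free_of_flat_of_isLocalRing
  have := Module.finitePresentation_of_projective (Oq O π) (Mtil O M π ⧸ Btil)
  have hB : Btil.FG := by
    have := Module.FinitePresentation.fg_ker Btil.mkQ Btil.mkQ_surjective
    rwa [Submodule.ker_mkQ] at this
  have hB' : (Btil.restrictScalars O).FG :=
    hB.restrictScalars_of_surjective Ideal.Quotient.mk_surjective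
  refine Module.Finite.of_fg (Submodule.FG.map _ ?_)
  refine Submodule.fg_of_fg_map_of_fg_inf_ker (redMapTil O M π) ?_ ?_
  · have hsurj : Function.Surjective (redMapTil O M π) := Submodule.mkQ_surjective _
    rwa [Submodule.map_comap_eq_of_surjective hsurj]
  · have hker : LinearMap.ker (redMapTil O M π) = Ideal.span {π} • ⊤ := Submodule.ker_mkQ _
    rw [inf_eq_right.2 (LinearMap.ker_le_comap _), hker]
    exact Submodule.FG.smul ⟨{π}, by simp⟩ Module.Finite.fg_top

variable (M π Btil) in
/-- Multiplication by `π` as a map `M → M'`. -/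
noncomputable def mulPi : M →ₗ[O] Mprime O M π Btil :=
  (π • M.subtype).codRestrict _ smul_mem_Mprime

@[simp] theorem coe_mulPi (m : M) : (mulPi M π Btil m : V) = π • (m : V) := rfl

variable (M π Btil) in
/-- The map `M̄ → M̄'` of `k`-vector spaces induced by multiplication by `π`. -/
noncomputable def mulPiBar :
    Mbar O M →ₗ[IsLocalRing.ResidueField O] Mbar O (Mprime O M π Btil) :=
  LinearMap.extendScalarsOfSurjective (R := O) IsLocalRing.residue_surjective
    (Submodule.mapQ _ _ (mulPi M π Btil) (by
      rw [← Submodule.map_le_iff_le_comap, Submodule.map_smul'']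
      exact Submodule.smul_mono le_rfl le_top))

theorem mulPiBar_redMap (m : M) :
    mulPiBar M π Btil (redMap O M m) = redMap O _ (mulPi M π Btil m) := rfl

theorem redIncl_redMap (m : Mprime O M π Btil) :
    redIncl O (Mprime O M π Btil) M Mprime_le (redMap O _ m)
      = redMap O M (Submodule.inclusion Mprime_le m) := rfl

theorem redMap_surjective (N : Submodule O V) : Function.Surjective (redMap O N) :=
  Submodule.mkQ_surjective _

/-- `M'` maps onto `B̄` under reduction, since `B̃` does. -/
theorem redMap_mem_iff {hπ : π ∈ IsLocalRing.maximalIdeal O}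
    {Bbar : Submodule (IsLocalRing.ResidueField O) (Mbar O M)}
    (hred : thetaMap O M π hπ '' (Btil : Set (Mtil O M π)) = (Bbar : Set (Mbar O M)))
    (x : Mbar O M) : x ∈ Bbar ↔
      ∃ m : Mprime O M π Btil, redMap O M (Submodule.inclusion Mprime_le m) = x := by
  rw [← SetLike.mem_coe, ← hred]
  constructor
  · rintro ⟨y, hy, rfl⟩
    obtain ⟨m, rfl⟩ := Submodule.mkQ_surjective _ y
    exact ⟨⟨m, (mem_Mprime m).2 hy⟩, rfl⟩
  · rintro ⟨m, rfl⟩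
    exact ⟨redMapTil O M π (Submodule.inclusion Mprime_le m), (mem_Mprime _).1 m.2, rfl⟩

theorem mulPiBar_eq_zero_iff [Module.Finite O M] [Module.IsTorsionFree O V]
    (hπ : π ∈ IsLocalRing.maximalIdeal O) (hπ0 : π ≠ 0)
    [Module.Flat (Oq O π) (Mtil O M π ⧸ Btil)]
    {Bbar : Submodule (IsLocalRing.ResidueField O) (Mbar O M)}
    (hred : thetaMap O M π hπ '' (Btil : Set (Mtil O M π)) = (Bbar : Set (Mbar O M)))
    (x : Mbar O M) : mulPiBar M π Btil x = 0 ↔ x ∈ Bbar := by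
  rw [redMap_mem_iff hred]
  obtain ⟨m, rfl⟩ := redMap_surjective M x
  rw [mulPiBar_redMap, redMap_eq_zero]
  constructor
  · intro h
    obtain ⟨a, ha, m', hm'⟩ := exists_smul_of_mem_smul_top _ h
    obtain ⟨b, hb, n, hn⟩ :=
      exists_add_smul_of_smul_eq hπ hπ0 m m' (congrArg Subtype.val hm')
    refine ⟨⟨b, hb⟩, ?_⟩
    have hmb : m = Submodule.inclusion Mprime_le ⟨b, hb⟩ + a • n := Subtype.ext hn
    rw [hmb, map_add, redMap_eq_zero.2 (Submodule.smul_mem_smul ha trivial), add_zero]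
  · rintro ⟨b, hb⟩
    have h : redMap O M (m - Submodule.inclusion Mprime_le b) = 0 := by
      rw [map_sub, hb, sub_self]
    obtain ⟨a, ha, n, hn⟩ := exists_smul_of_mem_smul_top _ (redMap_eq_zero.1 h)
    have hm : mulPi M π Btil m = π • b + a • mulPi M π Btil n := by
      rw [← map_smul, ← hn, map_sub]
      apply Subtype.ext
      simp
    rw [hm]
    exact add_mem (Submodule.smul_mem_smul hπ trivial) (Submodule.smul_mem_smul ha trivial)

theorem redIncl_eq_zero_iff [Module.Finite O M]
    (hπ : π ∈ IsLocalRing.maximalIdeal O) (hπ0 : π ≠ 0)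
    [Module.Flat (Oq O π) (Mtil O M π ⧸ Btil)] (x : Mbar O (Mprime O M π Btil)) :
    redIncl O (Mprime O M π Btil) M Mprime_le x = 0 ↔ ∃ y, mulPiBar M π Btil y = x := by
  constructor
  · obtain ⟨m, rfl⟩ := redMap_surjective _ x
    rw [redIncl_redMap, redMap_eq_zero]
    intro h
    obtain ⟨a, ha, n, hn⟩ := exists_smul_of_mem_smul_top _ h
    have hn' : (m : V) = a • (n : V) := congrArg Subtype.val hn
    obtain ⟨n₁, b, hb, hab⟩ := exists_smul_add_of_eq_smul hπ hπ0 n (hn' ▸ m.2)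
    refine ⟨redMap O M n₁, ?_⟩
    have hm : m = mulPi M π Btil n₁ + a • ⟨b, hb⟩ := Subtype.ext (hn'.trans hab)
    rw [mulPiBar_redMap, hm, map_add, redMap_eq_zero.2 (Submodule.smul_mem_smul ha trivial),
      add_zero]
  · rintro ⟨y, rfl⟩
    obtain ⟨m, rfl⟩ := redMap_surjective _ y
    rw [mulPiBar_redMap, redIncl_redMap, redMap_eq_zero]
    exact Submodule.smul_mem_smul (n := m) hπ trivial

variable (M π Btil) in
/-- `M/M' ≅ G̃`. -/
noncomputable def quotMprimeEquiv :
    (M ⧸ Submodule.comap M.subtype (Mprime O M π Btil)) ≃ₗ[O] (Mtil O M π ⧸ Btil) :=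
  (Submodule.quotEquivOfEq _ _ (by
      ext m
      rw [LinearMap.mem_ker]
      exact (mem_Mprime m).trans (Submodule.Quotient.mk_eq_zero Btil).symm)).trans
    (LinearMap.quotKerEquivOfSurjective
      ((Btil.mkQ.restrictScalars O).comp (redMapTil O M π))
      (Btil.mkQ_surjective.comp (Submodule.mkQ_surjective _)))

variable (M π Btil) in
/-- The restriction `M' → B̃` of the reduction `M → M̃`. -/
noncomputable def MprimeToBtil : Mprime O M π Btil →ₗ[O] Btil.restrictScalars O :=
  ((redMapTil O M π).comp (Submodule.inclusion Mprime_le)).codRestrict _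
    fun m => (mem_Mprime (Submodule.inclusion Mprime_le m)).1 m.2

theorem MprimeToBtil_surjective : Function.Surjective (MprimeToBtil M π Btil) := by
  rintro ⟨y, hy⟩
  obtain ⟨m, rfl⟩ := Submodule.mkQ_surjective _ y
  exact ⟨⟨m, (mem_Mprime m).2 hy⟩, rfl⟩

theorem mem_comap_smul_iff (x : Mprime O M π Btil) :
    x ∈ Submodule.comap (Mprime O M π Btil).subtype (Ideal.span {π} • M : Submodule O V) ↔
      ∃ m : M, mulPi M π Btil m = x := by
  rw [Submodule.mem_comap, Submodule.ideal_span_singleton_smul,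
    Submodule.mem_smul_pointwise_iff_exists]
  constructor
  · rintro ⟨v, hv, h⟩
    exact ⟨⟨v, hv⟩, Subtype.ext h⟩
  · rintro ⟨m, rfl⟩
    exact ⟨m, m.2, rfl⟩

variable (M π Btil) in
/-- `M'/πM ≅ B̃`. -/
noncomputable def MprimeQuotEquiv :
    (Mprime O M π Btil ⧸ Submodule.comap (Mprime O M π Btil).subtype
      (Ideal.span {π} • M : Submodule O V)) ≃ₗ[O] Btil :=
  (Submodule.quotEquivOfEq _ _ (by
      ext x
      rw [mem_comap_smul_iff, LinearMap.mem_ker]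
      have : MprimeToBtil M π Btil x = 0 ↔
          redMapTil O M π (Submodule.inclusion Mprime_le x) = 0 := Subtype.ext_iff
      rw [this, redMapTil_eq_zero]
      simp [Subtype.ext_iff, eq_comm])).trans
    (LinearMap.quotKerEquivOfSurjective (MprimeToBtil M π Btil) MprimeToBtil_surjective)

/-- The sequence `0 → M/M' → M'/πM' → M'/πM → 0`, whose maps are multiplication by `π` and the
projection. -/
theorem exists_exact [Module.IsTorsionFree O V] (hπ0 : π ≠ 0) :
    ∃ (f : (M ⧸ Submodule.comap M.subtype (Mprime O M π Btil)) →ₗ[O]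
            (Mprime O M π Btil ⧸
              ((Ideal.span {π}) • ⊤ : Submodule O (Mprime O M π Btil))))
       (g : (Mprime O M π Btil ⧸
              ((Ideal.span {π}) • ⊤ : Submodule O (Mprime O M π Btil))) →ₗ[O]
            (Mprime O M π Btil ⧸
              Submodule.comap (Mprime O M π Btil).subtype
                ((Ideal.span {π}) • M : Submodule O V))),
      Function.Injective f ∧ Function.Surjective g ∧ Function.Exact f g := by
  have hf : Submodule.comap M.subtype (Mprime O M π Btil) =
      Submodule.comap (mulPi M π Btil) (Ideal.span {π} • ⊤) := by
    ext m
    rw [Submodule.mem_comap, Submodule.mem_comap, mem_span_singleton_smul_top]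
    constructor
    · intro h
      exact ⟨⟨m, h⟩, rfl⟩
    · rintro ⟨n, hn⟩
      have : (m : V) = n := smul_right_injective V hπ0 (congrArg Subtype.val hn)
      rw [Submodule.subtype_apply, this]
      exact n.2
  have hg : (Ideal.span {π} • ⊤ : Submodule O (Mprime O M π Btil)) ≤
      Submodule.comap (Mprime O M π Btil).subtype (Ideal.span {π} • M : Submodule O V) := by
    intro x hx
    obtain ⟨n, rfl⟩ := mem_span_singleton_smul_top.1 hx
    exact (mem_comap_smul_iff _).2 ⟨Submodule.inclusion Mprime_le n, rfl⟩
  refine ⟨Submodule.mapQ _ _ (mulPi M π Btil) hf.le, Submodule.factor hg, ?_, ?_, ?_⟩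
  · rw [← LinearMap.ker_eq_bot, Submodule.ker_mapQ, ← hf, Submodule.mkQ_map_self]
  · exact Submodule.factor_surjective hg
  · intro x
    obtain ⟨x, rfl⟩ := Submodule.mkQ_surjective _ x
    constructor
    · intro h
      obtain ⟨m, rfl⟩ := (mem_comap_smul_iff x).1 ((Submodule.Quotient.mk_eq_zero _).1 h)
      exact ⟨Submodule.Quotient.mk m, rfl⟩
    · rintro ⟨y, hy⟩
      obtain ⟨m, rfl⟩ := Submodule.mkQ_surjective _ y
      rw [← hy]
      exact (Submodule.Quotient.mk_eq_zero _).2 ((mem_comap_smul_iff _).2 ⟨m, rfl⟩)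

end Modification

/-! ### Filtrations and integral models -/

section Filtrations

variable {O : Type*} [CommRing O] [IsDomain O] [ValuationRing O]
variable {K : Type*} [Field K] [Algebra O K] [IsFractionRing O K]
variable {V : Type*} [AddCommGroup V] [Module K V] [Module O V] [IsScalarTower O K V]
variable {s : ℕ} {Fil : Fin s → ℕ → Submodule K V}
variable {M : Submodule O V} {π : O} {Btil : Submodule (Oq O π) (Mtil O M π)}

/-- Because `O → k` is onto, the image of `Fil_i^j ∩ M` is already a `k`-subspace. -/
theorem mem_filBar_iff {N : Submodule O V} {i : Fin s} {j : ℕ} {x : Mbar O N} :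
    x ∈ filBar O K Fil N i j ↔ ∃ n : N, (n : V) ∈ Fil i j ∧ redMap O N n = x := by
  constructor
  · intro hx
    induction hx using Submodule.span_induction with
    | mem x hx => exact hx
    | zero => exact ⟨0, by simp, map_zero _⟩
    | add x y _ _ hx hy =>
      obtain ⟨m, hm, rfl⟩ := hx
      obtain ⟨n, hn, rfl⟩ := hy
      exact ⟨m + n, add_mem hm hn, map_add _ _ _⟩
    | smul a x _ hx =>
      obtain ⟨m, hm, rfl⟩ := hx
      obtain ⟨a, rfl⟩ := IsLocalRing.residue_surjective a
      exact ⟨a • m, ((Fil i j).restrictScalars O).smul_mem a hm, rfl⟩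
  · rintro ⟨n, hn, rfl⟩
    exact Submodule.subset_span ⟨n, hn, rfl⟩

theorem isIntegralModel_Mprime (hM : IsIntegralModel O K M)
    (hπ : π ∈ IsLocalRing.maximalIdeal O) (hπ0 : π ≠ 0) [Module.IsTorsionFree O V]
    [Module.Flat (Oq O π) (Mtil O M π ⧸ Btil)] : IsIntegralModel O K (Mprime O M π Btil) := by
  have := hM.1
  have hfin : Module.Finite O (Mprime O M π Btil) := finite_Mprime hπ
  refine ⟨hfin, ?_, ?_⟩
  · have : Module.Flat O (Mprime O M π Btil) := by
      rw [Module.Flat.flat_iff_torsion_eq_bot_of_isBezout,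
        ← Submodule.isTorsionFree_iff_torsion_eq_bot]
      infer_instance
    exact Module.free_of_flat_of_isLocalRing
  · have hπK : algebraMap O K π ≠ 0 := by simpa using hπ0
    rw [eq_top_iff, ← hM.2.2, Submodule.span_le]
    intro m hm
    have h : algebraMap O K π • m ∈ Submodule.span K (Mprime O M π Btil : Set V) := by
      rw [algebraMap_smul]
      exact Submodule.subset_span (smul_mem_Mprime ⟨m, hm⟩)
    exact (Submodule.smul_mem_iff _ hπK).1 h

end Filtrations

/-- Let `0 → B̃ → M̃ = M/πM → G̃ → 0` be a lifting modulo `π ≠ 0` of `0 → B̄ → M̄ → Ḡ → 0`,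
and set `M' = ker(M → M/πM → G̃)`. Then `M'` is again an integral model, there are
isomorphisms `M/M' ≅ G̃` and `M'/πM ≅ B̃` fitting into a short exact sequence
`0 → M/M' → M'/πM' → M'/πM → 0`, and tensoring with `k` yields a short exact sequence of
`k`-vector spaces `0 → Ḡ → M̄' → B̄ → 0` whose maps preserve the induced filtrations. -/
theorem elementary_modification
    (O : Type*) [CommRing O] [IsDomain O] [ValuationRing O]
    (K : Type*) [Field K] [Algebra O K] [IsFractionRing O K]
    (V : Type*) [AddCommGroup V] [Module K V] [Module O V] [IsScalarTower O K V]
    [FiniteDimensional K V]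
    {s : ℕ} (Fil : Fin s → ℕ → Submodule K V) (l : ℕ)
    (hdec : ∀ i, Antitone (Fil i)) (htop : ∀ i, Fil i 0 = ⊤) (hbot : ∀ i, Fil i l = ⊥)
    (M : Submodule O V) (hM : IsIntegralModel O K M)
    (π : O) (hπ : π ∈ IsLocalRing.maximalIdeal O) (hπ0 : π ≠ 0)
    (Bbar : Submodule (IsLocalRing.ResidueField O) (Mbar O M))
    (Btil : Submodule (Oq O π) (Mtil O M π))
    (hflat : Module.Flat (Oq O π) ((Mtil O M π) ⧸ Btil))
    (hred : thetaMap O M π hπ '' (Btil : Set (Mtil O M π)) = (Bbar : Set (Mbar O M)))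
    (hfil : ∀ i j, thetaMap O M π hπ ''
          ((filTil O K Fil M π i j ⊓ Btil : Submodule (Oq O π) (Mtil O M π)) : Set (Mtil O M π))
        = ((filBar O K Fil M i j ⊓ Bbar :
            Submodule (IsLocalRing.ResidueField O) (Mbar O M)) : Set (Mbar O M))) :
    IsIntegralModel O K (Mprime O M π Btil) ∧
    -- the short exact sequence 0 → M/M' → M'/πM' → M'/πM → 0 with M/M' ≅ G̃, M'/πM ≅ B̃
    (∃ (f : (M ⧸ Submodule.comap M.subtype (Mprime O M π Btil)) →ₗ[O]
            (Mprime O M π Btil ⧸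
              ((Ideal.span {π}) • ⊤ : Submodule O (Mprime O M π Btil))))
       (g : (Mprime O M π Btil ⧸
              ((Ideal.span {π}) • ⊤ : Submodule O (Mprime O M π Btil))) →ₗ[O]
            (Mprime O M π Btil ⧸
              Submodule.comap (Mprime O M π Btil).subtype
                ((Ideal.span {π}) • M : Submodule O V))),
      Function.Injective f ∧ Function.Surjective g ∧ Function.Exact f g) ∧
    Nonempty ((M ⧸ Submodule.comap M.subtype (Mprime O M π Btil)) ≃ₗ[O]
      ((Mtil O M π) ⧸ Btil)) ∧
    Nonempty ((Mprime O M π Btil ⧸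
        Submodule.comap (Mprime O M π Btil).subtype
          ((Ideal.span {π}) • M : Submodule O V)) ≃ₗ[O] Btil) ∧
    -- tensoring with k: 0 → Ḡ → M̄' → B̄ → 0, filtration-preserving
    (∃ u : ((Mbar O M) ⧸ Bbar) →ₗ[IsLocalRing.ResidueField O]
          Mbar O (Mprime O M π Btil),
      Function.Injective u ∧
      Set.range (redIncl O (Mprime O M π Btil) M (Submodule.map_subtype_le M _))
        = (Bbar : Set (Mbar O M)) ∧
      Function.Exact u (redIncl O (Mprime O M π Btil) M (Submodule.map_subtype_le M _)) ∧
      (∀ i j, Submodule.map u (Submodule.map Bbar.mkQ (filBar O K Fil M i j))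
        ≤ filBar O K Fil (Mprime O M π Btil) i j) ∧
      (∀ i j, redIncl O (Mprime O M π Btil) M (Submodule.map_subtype_le M _) ''
          (filBar O K Fil (Mprime O M π Btil) i j : Set (Mbar O (Mprime O M π Btil)))
        ⊆ ((filBar O K Fil M i j ⊓ Bbar :
            Submodule (IsLocalRing.ResidueField O) (Mbar O M)) : Set (Mbar O M)))) := by
  have := Module.IsTorsionFree.trans_faithfulSMul O K V
  have := hM.1
  refine ⟨isIntegralModel_Mprime hM hπ hπ0, exists_exact hπ0, ⟨quotMprimeEquiv M π Btil⟩,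
    ⟨MprimeQuotEquiv M π Btil⟩,
    Bbar.liftQ (mulPiBar M π Btil)
      fun x hx => (mulPiBar_eq_zero_iff hπ hπ0 hred x).2 hx, ?_, ?_, ?_, ?_, ?_⟩
  · rw [← LinearMap.ker_eq_bot, Submodule.ker_liftQ_eq_bot']
    ext x
    exact (mulPiBar_eq_zero_iff hπ hπ0 hred x).symm
  · ext x
    rw [SetLike.mem_coe, redMap_mem_iff hred]
    constructor
    · rintro ⟨y, rfl⟩
      obtain ⟨m, rfl⟩ := redMap_surjective _ y
      exact ⟨m, rfl⟩
    · rintro ⟨m, rfl⟩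
      exact ⟨redMap O _ m, rfl⟩
  · intro x
    refine (redIncl_eq_zero_iff hπ hπ0 x).trans ⟨?_, ?_⟩
    · rintro ⟨y, rfl⟩
      exact ⟨Bbar.mkQ y, rfl⟩
    · rintro ⟨y, rfl⟩
      obtain ⟨y, rfl⟩ := Bbar.mkQ_surjective y
      exact ⟨y, rfl⟩
  · rintro i j _ ⟨_, ⟨x, hx, rfl⟩, rfl⟩
    obtain ⟨m, hm, rfl⟩ := mem_filBar_iff.1 hx
    exact mem_filBar_iff.2
      ⟨mulPi M π Btil m, ((Fil i j).restrictScalars O).smul_mem π hm, rfl⟩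
  · rintro i j _ ⟨x, hx, rfl⟩
    obtain ⟨m, hm, rfl⟩ := mem_filBar_iff.1 hx
    exact ⟨mem_filBar_iff.2 ⟨Submodule.inclusion Mprime_le m, hm, rfl⟩,
      (redMap_mem_iff hred _).2 ⟨m, rfl⟩⟩
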